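/- Let G, A₁, …, A_m : [0,T] → Mₙ(ℂ) be continuous, let d₁, …, d_m ∈ ℂ, and let U be the propagator of G (U(0) = I, U'(t) = G(t)·U(t), U(t) invertible for every t). For 0 ≤ j ≤ m−1 define x_j(t) = e^{(d₁+⋯+d_j)t}·U(t)·∫₀ᵗ dt_{j+1} ∫₀^{t_{j+1}} dt_{j+2} ⋯ ∫₀^{t_{m−1}} dt_m e^{d_{j+1}t_{j+1}+⋯+d_m t_m}·Ã_{j+1}(t_{j+1}) ⋯ Ã_m(t_m), where Ã_k(s) = U(s)⁻¹·A_k(s)·U(s) (and the empty sum d₁+⋯+d_0 is 0), and define x_m(t) = e^{(d₁+⋯+d_m)t}·U(t). Then x_j(0) = 0 for 0 ≤ j ≤ m−1, x_m(0) = I, and these functions satisfy the coupled system: x_j'(t) = (G(t) + (d₁+⋯+d_j)·I)·x_j(t) + A_{j+1}(t)·x_{j+1}(t) for 0 ≤ j ≤ m−1, and x_m'(t) = (G(t) + (d₁+⋯+d_m)·I)·x_m(t), for all t ∈ [0,T]. -/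

import Mathlib

open MeasureTheory Set intervalIntegral

attribute [local instance] Matrix.linftyOpNormedAddCommGroup Matrix.linftyOpNormedRing
  Matrix.linftyOpNormedAlgebra

/-- The iterated (time-ordered simplex) integral
`nestedInt [M₁, …, M_k] t = ∫₀ᵗ dt₁ M₁(t₁) ∫₀^{t₁} dt₂ M₂(t₂) ⋯ ∫₀^{t_{k-1}} dt_k M_k(t_k)`. -/
noncomputable def nestedInt {n : ℕ} :
    List (ℝ → Matrix (Fin n) (Fin n) ℂ) → ℝ → Matrix (Fin n) (Fin n) ℂ
  | [] => fun _ => 1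
  | M :: Ms => fun t => ∫ τ in (0 : ℝ)..t, M τ * nestedInt Ms τ

theorem continuousOn_matInv {n : ℕ} {s : Set ℝ} {U : ℝ → Matrix (Fin n) (Fin n) ℂ}
    (hU : ContinuousOn U s) (hi : ∀ t ∈ s, IsUnit (U t)) :
    ContinuousOn (fun t => (U t)⁻¹) s := by
  have h : ∀ t ∈ s, (U t).det ≠ 0 := fun t ht =>
    ((Matrix.isUnit_iff_isUnit_det _).1 (hi t ht)).ne_zero
  have h1 : ContinuousOn (fun t => (U t).det) s :=
    (Continuous.matrix_det continuous_id).comp_continuousOn hU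
  have h2 : ContinuousOn (fun t => (U t).adjugate) s :=
    (Continuous.matrix_adjugate continuous_id).comp_continuousOn hU
  have h3 := (h1.inv₀ h).smul h2
  refine h3.congr fun t ht => ?_
  simp [Matrix.inv_def, Ring.inverse_eq_inv']

theorem hasDeriv_integral {n : ℕ} {T : ℝ} {f : ℝ → Matrix (Fin n) (Fin n) ℂ}
    (hf : ContinuousOn f (Icc 0 T)) {t : ℝ} (ht : t ∈ Icc (0 : ℝ) T) :
    HasDerivWithinAt (fun t => ∫ τ in (0 : ℝ)..t, f τ) (f t) (Icc 0 T) t := by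
  have : Fact (t ∈ Icc (0 : ℝ) T) := ⟨ht⟩
  refine intervalIntegral.integral_hasDerivWithinAt_right (t := Icc 0 T) ?_ ?_ (hf t ht)
  · refine ContinuousOn.intervalIntegrable ?_
    rw [uIcc_of_le ht.1]
    exact hf.mono (Icc_subset_Icc le_rfl ht.2)
  · have : TopologicalSpace.PseudoMetrizableSpace (Matrix (Fin n) (Fin n) ℂ) :=
      inferInstanceAs (TopologicalSpace.PseudoMetrizableSpace (Fin n → Fin n → ℂ))
    exact hf.stronglyMeasurableAtFilter_nhdsWithin measurableSet_Icc t

theorem nestedInt_continuousOn {n : ℕ} {T : ℝ}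
    (L : List (ℝ → Matrix (Fin n) (Fin n) ℂ)) (hL : ∀ M ∈ L, ContinuousOn M (Icc 0 T)) :
    ContinuousOn (nestedInt L) (Icc 0 T) := by
  induction L with
  | nil => exact continuousOn_const
  | cons M Ms ih =>
    have h := (hL M (by simp)).mul (ih fun N hN => hL N (by simp [hN]))
    intro t ht
    exact (hasDeriv_integral h ht).continuousWithinAt

theorem hasDeriv_exp_smul {n : ℕ} {s : Set ℝ} {t : ℝ} (c : ℂ)
    {F : ℝ → Matrix (Fin n) (Fin n) ℂ} {F' : Matrix (Fin n) (Fin n) ℂ}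
    (hF : HasDerivWithinAt F F' s t) :
    HasDerivWithinAt (fun t : ℝ => Complex.exp (c * (t : ℂ)) • F t)
      (c • (Complex.exp (c * (t : ℂ)) • F t) + Complex.exp (c * (t : ℂ)) • F') s t := by
  have h1 : HasDerivAt (fun t : ℝ => Complex.exp (c * (t : ℂ)))
      (Complex.exp (c * (t : ℂ)) * c) t := by
    have := ((Complex.ofRealCLM.hasDerivAt (x := t)).const_mul c).cexp
    simpa using this
  have h2 := h1.hasDerivWithinAt (s := s) |>.smul hF
  refine h2.congr_deriv ?_
  rw [smul_smul, mul_comm c (Complex.exp _)]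
  exact add_comm (G := Matrix (Fin n) (Fin n) ℂ) _ _

/-- products of exponentials. Let `U` be the propagator of `G` and, for
`0 ≤ j ≤ m` (with `A` and `d` indexed `1, …, m`), let
`x j t = e^{(d₁+⋯+d_j)t} U(t) ∫₀ᵗ dt_{j+1} ⋯ ∫₀^{t_{m-1}} dt_m
  e^{d_{j+1}t_{j+1}+⋯+d_m t_m} Ã_{j+1}(t_{j+1}) ⋯ Ã_m(t_m)`,
where `Ã_k s = (U s)⁻¹ A_k(s) U(s)`; in particular `x m t = e^{(d₁+⋯+d_m)t} U(t)`.
Then `x j 0 = 0` for `j < m`, `x m 0 = 1`, and the `x j` satisfy the coupled system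
`x_j' = (G + (d₁+⋯+d_j)·I) x_j + A_{j+1} x_{j+1}` for `j < m` and
`x_m' = (G + (d₁+⋯+d_m)·I) x_m`. -/
theorem statement13 {n m : ℕ} {T : ℝ} (hT : 0 < T)
    (G : ℝ → Matrix (Fin n) (Fin n) ℂ) (A : ℕ → ℝ → Matrix (Fin n) (Fin n) ℂ)
    (d : ℕ → ℂ) (U : ℝ → Matrix (Fin n) (Fin n) ℂ)
    (hG : ContinuousOn G (Icc 0 T))
    (hA : ∀ k, 1 ≤ k → k ≤ m → ContinuousOn (A k) (Icc 0 T))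
    (hU0 : U 0 = 1)
    (hU : ∀ t ∈ Icc (0 : ℝ) T, HasDerivWithinAt U (G t * U t) (Icc 0 T) t)
    (hUinv : ∀ t ∈ Icc (0 : ℝ) T, IsUnit (U t))
    (x : ℕ → ℝ → Matrix (Fin n) (Fin n) ℂ)
    (hx : ∀ j ≤ m, x j = fun (t : ℝ) =>
      Complex.exp ((∑ k ∈ Finset.Icc 1 j, d k) * (t : ℂ)) •
        (U t * nestedInt
          ((List.range' (j + 1) (m - j)).map
            fun k => fun (τ : ℝ) => Complex.exp (d k * (τ : ℂ)) • ((U τ)⁻¹ * A k τ * U τ)) t)) :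
    (∀ j < m, x j 0 = 0) ∧
    x m 0 = 1 ∧
    (∀ j < m, ∀ t ∈ Icc (0 : ℝ) T,
      HasDerivWithinAt (x j)
        ((G t + (∑ k ∈ Finset.Icc 1 j, d k) • (1 : Matrix (Fin n) (Fin n) ℂ)) * x j t
          + A (j + 1) t * x (j + 1) t)
        (Icc 0 T) t) ∧
    (∀ t ∈ Icc (0 : ℝ) T,
      HasDerivWithinAt (x m)
        ((G t + (∑ k ∈ Finset.Icc 1 m, d k) • (1 : Matrix (Fin n) (Fin n) ℂ)) * x m t)
        (Icc 0 T) t) := by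
  have hUc : ContinuousOn U (Icc 0 T) := fun t ht => (hU t ht).continuousWithinAt
  set At : ℕ → ℝ → Matrix (Fin n) (Fin n) ℂ := fun k => fun (τ : ℝ) =>
    Complex.exp (d k * (τ : ℂ)) • ((U τ)⁻¹ * A k τ * U τ) with hAt
  have hAc : ∀ k, 1 ≤ k → k ≤ m → ContinuousOn (At k) (Icc 0 T) := by
    intro k h1 h2
    have he : ContinuousOn (fun τ : ℝ => Complex.exp (d k * (τ : ℂ))) (Icc 0 T) := by
      fun_prop
    exact he.smul (((continuousOn_matInv hUc hUinv).mul (hA k h1 h2)).mul hUc)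
  have hNc : ∀ j ≤ m, ContinuousOn (nestedInt ((List.range' (j + 1) (m - j)).map At))
      (Icc 0 T) := by
    intro j hj
    refine nestedInt_continuousOn _ fun M hM => ?_
    obtain ⟨k, hk, rfl⟩ := List.mem_map.1 hM
    rw [List.mem_range'_1] at hk
    exact hAc k (by omega) (by omega)
  have hstep : ∀ j < m, nestedInt ((List.range' (j + 1) (m - j)).map At) = fun t =>
      ∫ τ in (0 : ℝ)..t, At (j + 1) τ *
        nestedInt ((List.range' (j + 1 + 1) (m - (j + 1))).map At) τ := by
    intro j hj
    obtain ⟨r, hr⟩ : ∃ r, m - j = r + 1 := ⟨m - j - 1, by omega⟩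
    have hr' : m - (j + 1) = r := by omega
    rw [hr, hr', List.range'_succ, List.map_cons]
    rfl
  have hm : nestedInt ((List.range' (m + 1) (m - m)).map At) = fun _ => 1 := by
    simp [nestedInt]
  refine ⟨?_, ?_, ?_, ?_⟩
  · intro j hj
    rw [hx j hj.le, hstep j hj]
    simp
  · rw [hx m le_rfl, hm]
    simp [hU0]
  · intro j hj t ht
    have hN := hasDeriv_integral ((hAc (j + 1) (by omega) (by omega)).mul (hNc (j + 1) hj)) ht
    have hF := hasDeriv_exp_smul (∑ k ∈ Finset.Icc 1 j, d k) ((hU t ht).mul hN)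
    rw [hx j hj.le, hx (j + 1) hj, hstep j hj]
    refine hF.congr_deriv ?_
    have hdet := (Matrix.isUnit_iff_isUnit_det _).1 (hUinv t ht)
    have hexp : Complex.exp ((∑ k ∈ Finset.Icc 1 (j + 1), d k) * (t : ℂ)) =
        Complex.exp ((∑ k ∈ Finset.Icc 1 j, d k) * (t : ℂ)) *
          Complex.exp (d (j + 1) * (t : ℂ)) := by
      rw [Finset.sum_Icc_succ_top (by omega), add_mul, Complex.exp_add]
    have hc : ∀ N : Matrix (Fin n) (Fin n) ℂ,
        U t * (At (j + 1) t * N) =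
          Complex.exp (d (j + 1) * (t : ℂ)) • (A (j + 1) t * (U t * N)) := by
      intro N
      simp only [hAt, smul_mul_assoc, mul_smul_comm, mul_assoc]
      rw [Matrix.mul_nonsing_inv_cancel_left _ _ hdet]
    simp only [Pi.mul_apply]
    rw [hc, hexp]
    simp only [add_mul, smul_add, smul_mul_assoc, mul_smul_comm, one_mul, mul_assoc, smul_smul]
    rw [mul_comm (∑ k ∈ Finset.Icc 1 j, d k)]
    abel
  · intro t ht
    have hF := hasDeriv_exp_smul (∑ k ∈ Finset.Icc 1 m, d k) (hU t ht)
    rw [hx m le_rfl, hm]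
    simp only [mul_one]
    refine hF.congr_deriv ?_
    simp only [add_mul, smul_add, smul_mul_assoc, mul_smul_comm, one_mul, smul_smul, mul_comm]
    abel
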